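/- arXiv:1303.4669 — 2 statements merged into one kernel-verified Lean document; each statement's English description precedes it below -/
import Mathlib

section
/- If C is a quasi-category and X is an arbitrary simplicial set, then the internal hom C^X is a quasi-category. -/
open CategoryTheory Simplicial MonoidalCategory

/-- Simplicial sets form a (cartesian) monoidal closed category; this provides the
internal homs `C^X := (ihom X).obj C`. -/
noncomputable instance : MonoidalClosed SSet.{0} :=
  inferInstanceAs (MonoidalClosed (SimplexCategoryᵒᵖ ⥤ Type 0))

/-- If `C` is a quasi-category and `X` is an arbitrary simplicial set, then the internal
hom `C^X` is a quasi-category. -/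
theorem quasicategory_ihom (C X : SSet.{0}) [SSet.Quasicategory C] :
    SSet.Quasicategory ((ihom X).obj C) := by
  -- The inclusion `X ⊗ Λ[n, i] ⟶ X ⊗ Δ[n]` is inner anodyne, so a horn in `C^X` is filled
  -- by transposing across the adjunction `X ⊗ - ⊣ C^X`.
  refine SSet.quasicategory_of_hasLiftingProperty _
    (Limits.IsTerminal.isTerminalObj (ihom X) _ Limits.terminalIsTerminal) ?_
  intro n i h0 hn
  have key : HasLiftingProperty (X ◁ Λ[n, i].ι) (Limits.terminal.from C) :=
    (SSet.innerAnodyneExtensions.horn_ι h0 hn).whiskerLeft X _ (SSet.mem_innerFibrations _)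
  have h := ((ihom.adjunction X).hasLiftingProperty_iff Λ[n, i].ι (Limits.terminal.from C)).1 key
  convert h
  exact Limits.IsTerminal.hom_ext
    (Limits.IsTerminal.isTerminalObj (ihom X) _ Limits.terminalIsTerminal) _ _
end

section
/- For any groupoid G, the fundamental groupoid of the geometric realization of the nerve of G is equivalent (as a category) to G. -/
open CategoryTheory

namespace NerveGpd
open Opposite
universe u

/-- The standard topological simplex. -/
abbrev Simp (n : SimplexCategory) := stdSimplex ℝ (Fin (n.len + 1))

/-- The characteristic map of a simplex. -/
noncomputable def sι {X : SSet.{u}} {n : SimplexCategory} (s : X.obj (op n)) :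
    C(Simp n, SSet.toTop.obj X) :=
  TopCat.toSSetObjEquiv _ (op n) ((sSetTopAdj.unit.app X).app (op n) s)

lemma sι_map {X : SSet.{u}} {n m : SimplexCategory} (θ : n ⟶ m) (s : X.obj (op m)) (t : Simp n) :
    sι (X.map θ.op s) t = sι s (stdSimplex.map θ t) := by
  have h := ConcreteCategory.congr_hom ((sSetTopAdj.unit.app X).naturality θ.op) s
  have h2 : (sSetTopAdj.unit.app X).app (op n) (X.map θ.op s) = 
     (TopCat.toSSet.obj (SSet.toTop.obj X)).map θ.op ((sSetTopAdj.unit.app X).app (op m) s) := h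
  unfold sι
  rw [h2]
  rfl

lemma map_sι {X Y : SSet.{u}} (f : X ⟶ Y) {n : SimplexCategory} (s : X.obj (op n)) (t : Simp n) :
    SSet.toTop.map f (sι s t) = sι (f.app (op n) s) t := by
  have h := congrArg (fun g => g.app (op n) s) (sSetTopAdj.unit.naturality f)
  have h2 : (sSetTopAdj.unit.app Y).app (op n) (f.app (op n) s) = 
     (TopCat.toSSet.map (SSet.toTop.map f)).app (op n) ((sSetTopAdj.unit.app X).app (op n) s) := h
  unfold sι
  rw [h2]
  rfl

section desc
variable {X : SSet.{u}} {Y : Type u} [TopologicalSpace Y]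
  (F : ∀ n : SimplexCategory, X.obj (op n) → C(Simp n, Y))
  (hF : ∀ (n m : SimplexCategory) (θ : n ⟶ m) (s : X.obj (op m)) (t : Simp n),
    F n (X.map θ.op s) t = F m s (stdSimplex.map θ t))

/-- Adjoint map. -/
noncomputable def descNat : X ⟶ TopCat.toSSet.obj (TopCat.of Y) where
  app n := ↾fun s => (TopCat.toSSetObjEquiv (TopCat.of Y) n).symm (F n.unop s)
  naturality := by
    intro n m θ
    ext s
    apply (TopCat.toSSetObjEquiv (TopCat.of Y) m).injective
    ext t
    exact hF _ _ θ.unop s t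

/-- Universal property of the realization. -/
noncomputable def desc : C(SSet.toTop.obj X, Y) :=
  ((sSetTopAdj.homEquiv X (TopCat.of Y)).symm (descNat F hF)).hom

lemma desc_sι {n : SimplexCategory} (s : X.obj (op n)) (t : Simp n) :
    desc F hF (sι s t) = F n s t := by
  have h := (sSetTopAdj.homEquiv X (TopCat.of Y)).apply_symm_apply (descNat F hF)
  rw [Adjunction.homEquiv_unit] at h
  have h2 := congrArg (fun g => TopCat.toSSetObjEquiv (TopCat.of Y) (op n) (g.app (op n) s) t) h
  exact h2

end desc

lemma hom_ext {X : SSet.{u}} {Y : TopCat.{u}} (f g : SSet.toTop.obj X ⟶ Y)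
    (h : ∀ (n : SimplexCategory) (s : X.obj (op n)) (t : Simp n), f (sι s t) = g (sι s t)) :
    f = g := by
  apply (sSetTopAdj.homEquiv X Y).injective
  rw [Adjunction.homEquiv_unit, Adjunction.homEquiv_unit]
  ext n s
  apply (TopCat.toSSetObjEquiv Y n).injective
  ext t
  exact h n.unop s t

/-- Every point of the realization lies in a simplex. -/
lemma sι_surj {X : SSet.{u}} (x : SSet.toTop.obj X) :
    ∃ (n : SimplexCategory) (s : X.obj (op n)) (t : Simp n), sι s t = x := by
  let : TopologicalSpace (ULift.{u} Prop) := ⊤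
  let f : SSet.toTop.obj X ⟶ TopCat.of (ULift.{u} Prop) := TopCat.ofHom
    ⟨fun x => ULift.up (∃ (n : SimplexCategory) (s : X.obj (op n)) (t : Simp n), sι s t = x),
      continuous_top⟩
  let g : SSet.toTop.obj X ⟶ TopCat.of (ULift.{u} Prop) := TopCat.ofHom
    ⟨fun x => ULift.up True, continuous_top⟩
  have h : f = g := hom_ext f g (fun n s t => by
    apply ULift.ext
    exact eq_true ⟨n, s, t, rfl⟩)
  have h2 := congrArg (fun k => (k x).down) h
  exact of_eq_true h2

end NerveGpd

namespace NerveGpd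
open Opposite
universe u

lemma smap_apply {n m : SimplexCategory} (θ : n ⟶ m) (t : Simp n) (y : Fin (m.len + 1)) :
    (stdSimplex.map θ t : Simp m) y = ∑ x, if θ.toOrderHom x = y then t x else 0 := by
  rw [stdSimplex.map_coe, FunOnFinite.linearMap_apply_apply, Finset.sum_filter]
  rfl

/-- The simplicial set with `n`-simplices `V^(n+1)`. -/
def EV (V : Type u) : SSet.{u} where
  obj n := Fin (n.unop.len + 1) → V
  map θ := ↾fun v i => v (θ.unop.toOrderHom i)
  map_id _ := rfl
  map_comp _ _ := rfl

/-- Functoriality. -/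
def EVmap {V W : Type u} (φ : V → W) : EV V ⟶ EV W where
  app _ := ↾fun v i => φ (v i)
  naturality _ _ _ := rfl

/-- Realization of EV -/
noncomputable abbrev RE (V : Type u) := SSet.toTop.obj (EV V)

/-- simplex in EV -/
def EV.mk {V : Type u} {n : SimplexCategory} (v : Fin (n.len + 1) → V) : (EV V).obj (op n) := v

/-- The unique point of the 0-simplex. -/
noncomputable def star : Simp (SimplexCategory.mk 0) := stdSimplex.vertex 0

/-- Vertices -/
noncomputable def pt {V : Type u} (v : V) : RE V :=
  sι (EV.mk (n := SimplexCategory.mk 0) fun _ => v) star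

/-- The map on realizations. -/
noncomputable def REmap {V W : Type u} (φ : V → W) : C(RE V, RE W) := (SSet.toTop.map (EVmap φ)).hom

lemma REmap_sι {V W : Type u} (φ : V → W) {n : SimplexCategory} (v : (EV V).obj (op n))
    (t : Simp n) : REmap φ (sι v t) = sι (EV.mk fun i => φ (v i)) t :=
  map_sι (EVmap φ) v t

lemma REmap_pt {V W : Type u} (φ : V → W) (v : V) : REmap φ (pt v) = pt (φ v) :=
  REmap_sι φ _ _

/-- Cone coordinates -/
noncomputable def cone {n : SimplexCategory} (p : Simp n × unitInterval) :
    Simp (SimplexCategory.mk (n.len + 1)) :=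
  ⟨Fin.cons (p.2 : ℝ) (fun i => (1 - (p.2 : ℝ)) * p.1 i), by
    constructor
    · intro i
      refine Fin.cases ?_ (fun i => ?_) i
      · exact p.2.2.1
      · exact mul_nonneg (sub_nonneg.2 p.2.2.2) (p.1.2.1 i)
    · change ∑ x : Fin (n.len + 1 + 1), _ = _
      rw [Fin.sum_univ_succ]
      simp only [Fin.cons_zero, Fin.cons_succ]
      rw [← Finset.mul_sum, stdSimplex.sum_eq_one]
      ring⟩

lemma cone_zero {n : SimplexCategory} (p : Simp n × unitInterval) :
    (cone p) (0 : Fin (n.len + 1 + 1)) = p.2 := rfl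

lemma cone_succ {n : SimplexCategory} (p : Simp n × unitInterval) (i : Fin (n.len + 1)) :
    (cone p) (i.succ : Fin (n.len + 1 + 1)) = (1 - (p.2 : ℝ)) * p.1 i := rfl

lemma continuous_cone {n : SimplexCategory} : Continuous (cone (n := n)) := by
  refine Continuous.subtype_mk (continuous_pi fun i => ?_) _
  refine Fin.cases ?_ (fun i => ?_) i
  · simp only [Fin.cons_zero]; fun_prop
  · simp only [Fin.cons_succ]
    have : Continuous fun p : Simp n × unitInterval => p.1 i :=
      (continuous_apply i).comp (continuous_subtype_val.comp continuous_fst)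
    fun_prop

/-- Extension of a monotone map to the cone -/
def coneHom {n m : SimplexCategory} (θ : n ⟶ m) :
    SimplexCategory.mk (n.len + 1) ⟶ SimplexCategory.mk (m.len + 1) :=
  SimplexCategory.mkHom ⟨Fin.cons 0 (fun i => (θ.toOrderHom i).succ), by
    intro i j
    refine Fin.cases (fun _ => ?_) (fun i => ?_) i
    · simp
    · refine Fin.cases (fun h => ?_) (fun j h => ?_) j
      · simp at h
      · simp only [Fin.cons_succ, Fin.succ_le_succ_iff] at h ⊢
        exact θ.toOrderHom.monotone h⟩

lemma smap_cone {n m : SimplexCategory} (θ : n ⟶ m) (t : Simp n) (r : unitInterval) :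
    stdSimplex.map (coneHom θ) (cone (t, r)) = cone (stdSimplex.map θ t, r) := by
  ext y
  refine (smap_apply (coneHom θ) (cone (t, r)) y).trans ?_
  change ∑ x : Fin (n.len + 1 + 1), _ = _
  rw [Fin.sum_univ_succ]
  change _ = (cone (stdSimplex.map θ t, r)) (y : Fin (m.len + 1 + 1))
  simp only [cone_zero, cone_succ]
  have h0 : (coneHom θ).toOrderHom (0 : Fin (n.len + 1 + 1)) = (0 : Fin (m.len + 1 + 1)) := rfl
  have h1 : ∀ i : Fin (n.len + 1), (coneHom θ).toOrderHom (i.succ : Fin (n.len + 1 + 1)) =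
    ((θ.toOrderHom i).succ : Fin (m.len + 1 + 1)) := fun _ => rfl
  rw [h0]
  simp only [h1]
  change Fin (m.len + 1 + 1) at y
  revert y
  intro y
  refine Fin.cases ?_ (fun y => ?_) y
  · simp only [cone_zero]
    rw [if_pos trivial, Finset.sum_eq_zero, add_zero]
    intro i _
    rw [if_neg (Fin.succ_ne_zero _)]
  · rw [cone_succ]
    dsimp only
    rw [smap_apply, if_neg (Fin.succ_ne_zero _).symm, zero_add, Finset.mul_sum]
    refine Finset.sum_congr rfl fun i _ => ?_
    simp only [Fin.succ_inj, mul_ite, mul_zero]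

/-- succ -/
def succHom (n : SimplexCategory) : n ⟶ SimplexCategory.mk (n.len + 1) :=
  SimplexCategory.mkHom ⟨Fin.succ, Fin.strictMono_succ.monotone⟩

/-- zero -/
def zeroHom (n : SimplexCategory) : SimplexCategory.mk 0 ⟶ n :=
  SimplexCategory.mkHom ⟨fun _ => 0, fun _ _ _ => le_rfl⟩

lemma cone_at_zero {n : SimplexCategory} (t : Simp n) :
    cone (t, 0) = stdSimplex.map (succHom n) t := by
  ext y
  refine Eq.trans ?_ (smap_apply (succHom n) t y).symm
  have h1 : ∀ i : Fin (n.len + 1), (succHom n).toOrderHom i = (i.succ : Fin (n.len + 1 + 1)) :=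
    fun _ => rfl
  simp only [h1]
  change Fin (n.len + 1 + 1) at y
  refine Fin.cases ?_ (fun y => ?_) y
  · rw [Finset.sum_eq_zero]
    · rfl
    intro i _
    rw [if_neg (Fin.succ_ne_zero _)]
  · rw [cone_succ]
    simp only [Fin.succ_inj]
    simp

lemma cone_at_one {n : SimplexCategory} (t : Simp n) :
    cone (t, 1) = stdSimplex.map (zeroHom (SimplexCategory.mk (n.len + 1))) star := by
  ext y
  refine Eq.trans ?_ (smap_apply (zeroHom (SimplexCategory.mk (n.len + 1))) star y).symm
  have h1 : ∀ i, (zeroHom (SimplexCategory.mk (n.len + 1))).toOrderHom i = (0 : Fin (n.len + 1 + 1)) :=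
    fun _ => rfl
  simp only [h1]
  change Fin (n.len + 1 + 1) at y
  refine Fin.cases ?_ (fun y => ?_) y
  · have := stdSimplex.sum_eq_one star
    simp only [if_true]
    rw [this]
    rfl
  · rw [cone_succ]
    simp only [(Fin.succ_ne_zero y).symm]
    simp

/-- The contraction -/
noncomputable def contr {V : Type u} (v₀ : V) : C(RE V, C(unitInterval, RE V)) :=
  desc (fun n v => ContinuousMap.curry
    ((sι (EV.mk (n := SimplexCategory.mk (n.len + 1)) (Fin.cons v₀ v : Fin (n.len + 1 + 1) → V))).comp
      ⟨cone, continuous_cone⟩)) (by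
  intro n m θ s t
  ext r
  change sι (EV.mk (n := SimplexCategory.mk (n.len + 1)) _) (cone (t, r)) = 
    sι (EV.mk (n := SimplexCategory.mk (m.len + 1)) _) (cone (stdSimplex.map θ t, r))
  rw [← smap_cone, ← sι_map]
  congr 2
  refine funext fun (i : Fin (n.len + 1 + 1)) => ?_
  refine Fin.cases ?_ (fun i => ?_) i
  · rfl
  · rfl)

instance {V : Type u} [Nonempty V] : ContractibleSpace (RE V) := by
  obtain ⟨v₀⟩ := ‹Nonempty V›
  rw [contractible_iff_id_nullhomotopic]
  refine ⟨pt v₀, ⟨⟨⟨fun p => contr v₀ p.2 p.1, by fun_prop⟩, ?_, ?_⟩⟩⟩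
  · intro x
    obtain ⟨n, s, t, rfl⟩ := sι_surj x
    simp only [contr]
    rw [desc_sι]
    change sι (EV.mk (n := SimplexCategory.mk (n.len + 1)) _) (cone (t, 0)) = sι s t
    rw [cone_at_zero, ← sι_map]
    rfl
  · intro x
    obtain ⟨n, s, t, rfl⟩ := sι_surj x
    simp only [contr]
    rw [desc_sι]
    change sι (EV.mk (n := SimplexCategory.mk (n.len + 1)) _) (cone (t, 1)) = pt v₀
    rw [cone_at_one, ← sι_map]
    rfl

end NerveGpd

namespace NerveGpd
open Opposite
universe u
open MeasureTheory

/-- Functions on `[0,1)`, with the distance measuring the set where they differ. -/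
def StepF (V : Type u) : Type u := Set.Ico (0 : ℝ) 1 → V

noncomputable instance (V : Type u) : PseudoEMetricSpace (StepF V) where
  edist a b := volume (Set.image Subtype.val {s : Set.Ico (0 : ℝ) 1 | a s ≠ b s})
  edist_self a := by simp
  edist_comm a b := by simp only [ne_comm]
  edist_triangle a b c := by
    refine le_trans (measure_mono ?_) (measure_union_le _ _)
    rw [← Set.image_union]
    refine Set.image_mono fun s hs => ?_
    by_contra h
    simp only [Set.mem_union, Set.mem_ofPred_eq, not_or, not_not] at h hs
    exact hs (h.1.trans h.2)

lemma StepF.edist_def {V : Type u} (a b : StepF V) :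
    edist a b = volume (Set.image Subtype.val {s : Set.Ico (0 : ℝ) 1 | a s ≠ b s}) := rfl

lemma StepF.edist_of_forall_ne {V : Type u} (a b : StepF V) (h : ∀ s, a s ≠ b s) :
    edist a b = 1 := by
  rw [StepF.edist_def]
  have : {s : Set.Ico (0 : ℝ) 1 | a s ≠ b s} = Set.univ := Set.eq_univ_of_forall h
  rw [this, Set.image_univ, Subtype.range_coe, Real.volume_Ico]
  norm_num

/-- Partial sums. -/
noncomputable def psum {n : SimplexCategory} (t : Simp n) (k : ℕ) : ℝ :=
  ∑ j : Fin (n.len + 1), if j.val < k then t j else 0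

lemma psum_zero {n : SimplexCategory} (t : Simp n) : psum t 0 = 0 := by simp [psum]

lemma psum_top {n : SimplexCategory} (t : Simp n) : psum t (n.len + 1) = 1 := by
  rw [← stdSimplex.sum_eq_one t]
  refine Finset.sum_congr rfl fun j _ => if_pos j.2

lemma psum_mono {n : SimplexCategory} (t : Simp n) : Monotone (psum t) := by
  intro k l h
  refine Finset.sum_le_sum fun j _ => ?_
  have := stdSimplex.zero_le t j
  split_ifs <;> linarith

lemma continuous_psum {n : SimplexCategory} (k : ℕ) : Continuous fun t : Simp n => psum t k := by
  refine continuous_finsetSum _ fun j _ => ?_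
  have : Continuous fun t : Simp n => t j := (continuous_apply j).comp continuous_subtype_val
  split_ifs
  · exact this
  · exact continuous_const

lemma exists_idx {n : SimplexCategory} (t : Simp n) (s : Set.Ico (0 : ℝ) 1) :
    ∃ i : Fin (n.len + 1), psum t i.val ≤ s ∧ s < psum t (i.val + 1) := by
  classical
  have hex : ∃ k, (s : ℝ) < psum t k := ⟨n.len + 1, by rw [psum_top]; exact s.2.2⟩
  have h1 := Nat.find_spec hex
  have h2 : Nat.find hex ≤ n.len + 1 := Nat.find_min' hex (by rw [psum_top]; exact s.2.2)
  have h0 : Nat.find hex ≠ 0 := by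
    intro h
    rw [h, psum_zero] at h1
    exact absurd s.2.1 (not_le.2 h1)
  obtain ⟨k, hk⟩ := Nat.exists_eq_succ_of_ne_zero h0
  refine ⟨⟨k, by omega⟩, ?_, ?_⟩
  · exact not_lt.1 (Nat.find_min hex (by rw [hk]; exact Nat.lt_succ_self k))
  · rw [hk] at h1
    exact h1

/-- Index -/
noncomputable def idx {n : SimplexCategory} (t : Simp n) (s : Set.Ico (0 : ℝ) 1) :
    Fin (n.len + 1) := (exists_idx t s).choose

lemma idx_spec {n : SimplexCategory} (t : Simp n) (s : Set.Ico (0 : ℝ) 1) :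
    psum t (idx t s).val ≤ s ∧ s < psum t ((idx t s).val + 1) := (exists_idx t s).choose_spec

lemma idx_unique {n : SimplexCategory} (t : Simp n) (s : Set.Ico (0 : ℝ) 1) (i : Fin (n.len + 1))
    (h1 : psum t i.val ≤ s) (h2 : s < psum t (i.val + 1)) : idx t s = i := by
  obtain ⟨h3, h4⟩ := idx_spec t s
  rcases lt_trichotomy (idx t s) i with h | h | h
  · have := psum_mono t (Nat.succ_le_of_lt (Fin.lt_def.1 h))
    simp only [Nat.succ_eq_add_one] at this
    linarith
  · exact h
  · have := psum_mono t (Nat.succ_le_of_lt (Fin.lt_def.1 h))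
    simp only [Nat.succ_eq_add_one] at this
    linarith

lemma psum_map {n m : SimplexCategory} (θ : n ⟶ m) (t : Simp n) (k : ℕ) :
    psum (stdSimplex.map θ t : Simp m) k =
      ∑ x : Fin (n.len + 1), if (θ.toOrderHom x).val < k then t x else 0 := by
  unfold psum
  simp only [smap_apply]
  have : ∀ j : Fin (m.len + 1), (if j.val < k then ∑ x, if θ.toOrderHom x = j then t x else 0 else 0)
      = ∑ x, if θ.toOrderHom x = j then (if (θ.toOrderHom x).val < k then t x else 0) else 0 := by
    intro j
    split_ifs with h
    · refine Finset.sum_congr rfl fun x _ => ?_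
      split_ifs with h1 h2 <;> first | rfl | (subst h1; omega)
    · symm
      refine Finset.sum_eq_zero fun x _ => ?_
      split_ifs with h1 h2 <;> first | rfl | (subst h1; omega)
  rw [Finset.sum_congr rfl (fun j _ => this j), Finset.sum_comm]
  simp

lemma idx_map {n m : SimplexCategory} (θ : n ⟶ m) (t : Simp n) (s : Set.Ico (0 : ℝ) 1) :
    idx (stdSimplex.map θ t : Simp m) s = θ.toOrderHom (idx t s) := by
  obtain ⟨h3, h4⟩ := idx_spec t s
  apply idx_unique
  · refine le_trans ?_ h3
    rw [psum_map]
    refine Finset.sum_le_sum fun j _ => ?_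
    have := stdSimplex.zero_le t j
    split_ifs with h1 h2
    · rfl
    · exfalso
      have := θ.toOrderHom.monotone (Fin.le_def.2 (not_lt.1 h2))
      exact absurd h1 (not_lt.2 (Fin.le_def.1 this))
    · exact this
    · rfl
  · refine lt_of_lt_of_le h4 ?_
    rw [psum_map]
    refine Finset.sum_le_sum fun j _ => ?_
    have := stdSimplex.zero_le t j
    split_ifs with h1 h2
    · rfl
    · exfalso
      have := θ.toOrderHom.monotone (Fin.le_def.2 (Nat.lt_succ_iff.1 h1))
      exact absurd (Nat.lt_succ_of_le (Fin.le_def.1 this)) h2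
    · exact this
    · rfl

/-- The step function -/
noncomputable def step {V : Type u} {n : SimplexCategory} (v : Fin (n.len + 1) → V) (t : Simp n) :
    StepF V := fun s => v (idx t s)

lemma edist_step_le {V : Type u} {n : SimplexCategory} (v : Fin (n.len + 1) → V) (t t' : Simp n) :
    edist (step v t) (step v t') ≤
      ∑ k ∈ Finset.range (n.len + 2), ENNReal.ofReal |psum t k - psum t' k| := by
  have : ∀ k, ENNReal.ofReal |psum t k - psum t' k| = volume (Set.uIcc (psum t' k) (psum t k)) := by
    intro k
    rw [Real.volume_interval]
  simp only [this]
  rw [StepF.edist_def]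
  refine le_trans (measure_mono ?_) (measure_biUnion_finset_le _ _)
  rintro _ ⟨s, hs, rfl⟩
  have hne : idx t s ≠ idx t' s := fun h => hs (by simp only [step, h])
  obtain ⟨h1, h2⟩ := idx_spec t s
  obtain ⟨h3, h4⟩ := idx_spec t' s
  simp only [Set.mem_iUnion, Finset.mem_range]
  rcases lt_or_gt_of_ne hne with h | h
  · refine ⟨(idx t s).val + 1, by omega, ?_⟩
    have := psum_mono t' (Nat.succ_le_of_lt (Fin.lt_def.1 h))
    simp only [Nat.succ_eq_add_one] at this
    rw [Set.mem_uIcc]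
    left
    constructor <;> linarith
  · refine ⟨(idx t' s).val + 1, by omega, ?_⟩
    have := psum_mono t (Nat.succ_le_of_lt (Fin.lt_def.1 h))
    simp only [Nat.succ_eq_add_one] at this
    rw [Set.mem_uIcc]
    right
    constructor <;> linarith

lemma continuous_step {V : Type u} {n : SimplexCategory} (v : Fin (n.len + 1) → V) :
    Continuous (step (n := n) v) := by
  rw [continuous_iff_continuousAt]
  intro t
  rw [ContinuousAt, tendsto_iff_edist_tendsto_0]
  refine tendsto_of_tendsto_of_tendsto_of_le_of_le tendsto_const_nhds ?_ (fun _ => zero_le)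
    (fun t' => edist_step_le v t' t)
  have : Continuous fun t' : Simp n =>
      ∑ k ∈ Finset.range (n.len + 2), ENNReal.ofReal |psum t' k - psum t k| := by
    refine continuous_finsetSum _ fun k _ => ENNReal.continuous_ofReal.comp ?_
    exact ((continuous_psum k).sub continuous_const).abs
  have h := this.tendsto t
  simpa using h

/-- The map to step functions -/
noncomputable def toStep (V : Type u) : C(RE V, StepF V) :=
  desc (fun n v => ⟨step (n := n) v, continuous_step (n := n) v⟩) (by
    intro n m θ v t
    refine funext fun s => ?_
    exact congrArg v (idx_map θ t s).symm)

lemma toStep_sι {V : Type u} {n : SimplexCategory} (v : (EV V).obj (op n)) (t : Simp n) :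
    toStep V (sι v t) = step (n := n) v t := desc_sι _ _ _ _

lemma pt_injective {V : Type u} : Function.Injective (pt (V := V)) := by
  intro v w h
  have h2 := congrArg (toStep V) h
  unfold pt at h2
  rw [toStep_sι, toStep_sι] at h2
  exact congrFun h2 ⟨0, by simp⟩

section action

variable {A : Type*} [Group A] {V : Type u} [MulAction A V]

noncomputable instance actRE : MulAction A (RE V) where
  smul g e := REmap (fun v : V => g • v) e
  one_smul e := by
    obtain ⟨n, s, t, rfl⟩ := sι_surj e
    refine (REmap_sι _ _ _).trans ?_
    simp only [one_smul]
    rfl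
  mul_smul g h e := by
    obtain ⟨n, s, t, rfl⟩ := sι_surj e
    refine (REmap_sι _ _ _).trans ?_
    refine Eq.trans ?_ (congrArg (REmap (fun v : V => g • v)) (REmap_sι _ _ _)).symm
    rw [REmap_sι]
    simp only [mul_smul]
    rfl

lemma smul_def (g : A) (e : RE V) : g • e = REmap (fun v : V => g • v) e := rfl

lemma smul_pt (g : A) (v : V) : g • pt v = pt (g • v) := REmap_pt _ _

lemma toStep_smul (g : A) (e : RE V) (s) : toStep V (g • e) s = g • (toStep V e s : V) := by
  obtain ⟨n, v, t, rfl⟩ := sι_surj e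
  rw [smul_def, REmap_sι, toStep_sι, toStep_sι]
  rfl

/-- The quotient projection. -/
noncomputable def proj (A : Type*) [Group A] {V : Type u} [MulAction A V] :
    RE V → Quotient (MulAction.orbitRel A (RE V)) := Quotient.mk _

lemma proj_cov (hfree : ∀ (g : A) (v : V), g • v = v → g = 1) :
    IsQuotientCoveringMap (proj A (V := V)) A where
  __ := (isQuotientMap_quotient_mk' (s := MulAction.orbitRel A (RE V)))
  continuous_const_smul g := (REmap (fun v : V => g • v)).continuous
  apply_eq_iff_mem_orbit := Quotient.eq''
  disjoint e := by
    refine ⟨toStep V ⁻¹' Metric.eball (toStep V e) (1 / 2),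
      (toStep V).continuous.continuousAt.preimage_mem_nhds (Metric.eball_mem_nhds _ (by simp)), ?_⟩
    rintro g ⟨_, ⟨e', h1, rfl⟩, h2⟩
    by_contra hg
    simp only [Set.mem_preimage, Metric.mem_eball] at h1 h2
    have h3 : edist (toStep V (g • e')) (toStep V e') = 1 := by
      apply StepF.edist_of_forall_ne
      intro s hs
      rw [toStep_smul] at hs
      exact hg (hfree _ _ hs)
    have h4 := edist_triangle_right (toStep V (g • e')) (toStep V e') (toStep V e)
    have h5 := ENNReal.add_lt_add h2 h1
    rw [ENNReal.add_halves] at h5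
    rw [h3] at h4
    exact absurd h4 (not_le.2 h5)

end action

end NerveGpd

namespace NerveGpd
open Opposite
universe u

section gpd

variable {G : Type} [Groupoid.{u} G]

/-- Arrows out of `x`. -/
abbrev VV (x : G) : Type u := Σ y : G, (x ⟶ y)

instance (x : G) : MulAction (x ⟶ x) (VV x) where
  smul g v := ⟨v.1, g ≫ v.2⟩
  one_smul v := Sigma.ext rfl (heq_of_eq (Category.id_comp v.2))
  mul_smul g h v := Sigma.ext rfl (heq_of_eq (Category.assoc g h v.2))

lemma smul_VV (x : G) (g : x ⟶ x) (v : VV x) : g • v = ⟨v.1, g ≫ v.2⟩ := rfl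

lemma VV_free (x : G) (g : x ⟶ x) (v : VV x) (h : g • v = v) : g = 1 := by
  obtain ⟨y, f⟩ := v
  rw [smul_VV] at h
  have h2 : g ≫ f = f := eq_of_heq (Sigma.mk.inj h).2
  change g = 𝟙 x
  rwa [← cancel_mono f, Category.id_comp]

instance (x : G) : Nonempty (VV x) := ⟨⟨x, 𝟙 x⟩⟩

/-- The simplex of the nerve associated with a tuple of arrows out of `x`. -/
noncomputable def pS (x : G) {n : ℕ} (v : Fin (n + 1) → VV x) : ComposableArrows G n where
  obj i := (v i).1
  map {i j} _ := inv (v i).2 ≫ (v j).2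
  map_id i := by simp
  map_comp _ _ := by simp

/-- The map `EV (VV x) ⟶ nerve G`. -/
noncomputable def pN (x : G) : EV (VV x) ⟶ nerve G where
  app _ := ↾fun v => pS x v
  naturality _ _ _ := rfl

/-- its realization -/
noncomputable def p (x : G) : C(RE (VV x), SSet.toTop.obj (nerve G)) := (SSet.toTop.map (pN x)).hom

lemma p_sι (x : G) {n : SimplexCategory} (v : (EV (VV x)).obj (op n)) (t : Simp n) :
    p x (sι v t) = sι (X := nerve G) (n := n) (pS x v) t := map_sι (pN x) v t

/-- translation by an arrow -/
def Lf {x y : G} (f : x ⟶ y) (v : VV y) : VV x := ⟨v.1, f ≫ v.2⟩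

lemma p_Lf {x y : G} (f : x ⟶ y) (e : RE (VV y)) : p x (REmap (Lf f) e) = p y e := by
  obtain ⟨n, v, t, rfl⟩ := sι_surj e
  rw [REmap_sι, p_sι, p_sι]
  have : pS x (fun i => Lf f (v i)) = pS y v := by
    refine Functor.hext (fun _ => rfl) fun i j _ => heq_of_eq ?_
    simp [pS, Lf]
  exact congrArg (fun w => sι (X := nerve G) (n := n) w t) this

lemma p_smul {x : G} (g : x ⟶ x) (e : RE (VV x)) : p x (g • e) = p x e := p_Lf g e

lemma p_eq_of_proj {x : G} {e e' : RE (VV x)} (h : proj (x ⟶ x) e = proj (x ⟶ x) e') :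
    p x e = p x e' := by
  obtain ⟨g, rfl⟩ := (proj_cov (VV_free x)).apply_eq_iff_mem_orbit.1 h
  exact p_smul g _

/-- vertex of the nerve -/
def bS (y : G) : (nerve G).obj (op (SimplexCategory.mk 0)) := ComposableArrows.mk₀ y

/-- vertex of the realization of the nerve -/
noncomputable def bpt (y : G) : SSet.toTop.obj (nerve G) := sι (bS y) star

lemma p_pt {x y : G} (f : x ⟶ y) : p x (pt ⟨y, f⟩) = bpt y := by
  unfold pt
  rw [p_sι]
  exact congrArg (fun w => sι (X := nerve G) (n := SimplexCategory.mk 0) w star)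
    (ComposableArrows.ext₀ rfl)

/-- a lift of a simplex -/
def lift {x : G} {n : ℕ} (σ : ComposableArrows G n) (f : x ⟶ σ.obj 0) : Fin (n + 1) → VV x :=
  fun i => ⟨σ.obj i, f ≫ σ.map (homOfLE (Fin.zero_le i))⟩

lemma pS_lift {x : G} {n : ℕ} (σ : ComposableArrows G n) (f : x ⟶ σ.obj 0) :
    pS x (lift σ f) = σ := by
  refine Functor.hext (fun _ => rfl) fun i j h => heq_of_eq ?_
  refine (IsIso.inv_comp_eq _).2 ?_
  change f ≫ σ.map (homOfLE (Fin.zero_le j)) = (f ≫ σ.map (homOfLE (Fin.zero_le i))) ≫ σ.map h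
  rw [Category.assoc, ← Functor.map_comp]
  rfl

lemma lift_pS {x : G} {n : ℕ} (v : Fin (n + 1) → VV x) (f : x ⟶ (v 0).1) :
    lift (pS x v) f = fun i => (f ≫ inv (v 0).2) • v i := by
  funext i
  refine Sigma.ext rfl (heq_of_eq ?_)
  simp [lift, pS, smul_VV]

lemma proj_smul {x : G} (g : x ⟶ x) (e : RE (VV x)) : proj (x ⟶ x) (g • e) = proj (x ⟶ x) e :=
  (proj_cov (VV_free x)).apply_eq_iff_mem_orbit.2 ⟨g, rfl⟩

lemma proj_of_pS {x : G} {n : SimplexCategory} (v w : (EV (VV x)).obj (op n))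
    (h : pS x v = pS x w) (t : Simp n) : proj (x ⟶ x) (sι v t) = proj (x ⟶ x) (sι w t) := by
  have key : ∀ (v : (EV (VV x)).obj (op n)) (f : x ⟶ (pS x v).obj 0),
      proj (x ⟶ x) (sι (EV.mk (lift (pS x v) f)) t) = proj (x ⟶ x) (sι v t) := by
    intro v f
    refine (congrArg (fun w => proj (x ⟶ x) (sι (EV.mk (n := n) w) t)) (lift_pS v f)).trans ?_
    have h1 : ∀ g : x ⟶ x, proj (x ⟶ x) (sι (EV.mk (n := n) fun i => g • (v i : VV x)) t) =
        proj (x ⟶ x) (sι v t) := by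
      intro g
      rw [← proj_smul g (sι v t), smul_def, REmap_sι]
    exact h1 _
  have h1 : ∀ (σ : ComposableArrows G n.len), pS x v = σ → ∃ f : x ⟶ σ.obj 0,
      proj (x ⟶ x) (sι (EV.mk (lift σ f)) t) = proj (x ⟶ x) (sι v t) := by
    rintro _ rfl
    exact ⟨(v (0 : Fin (n.len + 1))).2, key v _⟩
  obtain ⟨f, hf⟩ := h1 _ h
  rw [← hf, key]

open Classical in
/-- The map from the nerve to the quotient, on simplices -/
noncomputable def rS (x : G) (n : SimplexCategory) (σ : ComposableArrows G n.len) :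
    C(Simp n, Quotient (MulAction.orbitRel (x ⟶ x) (RE (VV x)))) :=
  if h : Nonempty (x ⟶ σ.obj 0) then
    ⟨fun t => proj (x ⟶ x) (sι (EV.mk (n := n) (lift σ h.some)) t),
      (proj_cov (VV_free x)).isCoveringMap.continuous.comp (ContinuousMap.continuous _)⟩
  else .const _ (proj (x ⟶ x) (pt ⟨x, 𝟙 x⟩))

lemma rS_pS (x : G) (n : SimplexCategory) (v : (EV (VV x)).obj (op n)) (t : Simp n) :
    rS x n (pS x v) t = proj (x ⟶ x) (sι v t) := by
  have h : Nonempty (x ⟶ (pS x v).obj 0) := ⟨(v (0 : Fin (n.len + 1))).2⟩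
  rw [rS, dif_pos h]
  exact proj_of_pS _ _ (pS_lift _ _) t

/-- first vertex -/
def obj0 {n : ℕ} (σ : ComposableArrows G n) : G := σ.obj 0

lemma nonempty_iff {x : G} {n m : SimplexCategory} (θ : n ⟶ m) (σ : ComposableArrows G m.len) :
    Nonempty (x ⟶ obj0 (n := n.len) ((nerve G).map θ.op σ)) ↔
      Nonempty (x ⟶ obj0 σ) := by
  have f : obj0 σ ⟶ obj0 (n := n.len) ((nerve G).map θ.op σ) :=
    σ.map (homOfLE (Fin.zero_le (θ.toOrderHom 0)))
  exact ⟨fun ⟨g⟩ => ⟨g ≫ inv f⟩, fun ⟨g⟩ => ⟨g ≫ f⟩⟩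

/-- The map from the nerve to the quotient -/
noncomputable def r (x : G) : C(SSet.toTop.obj (nerve G),
    Quotient (MulAction.orbitRel (x ⟶ x) (RE (VV x)))) :=
  desc (rS x) (by
    intro n m θ σ t
    by_cases h : Nonempty (x ⟶ obj0 (n := m.len) σ)
    · obtain ⟨f⟩ := h
      have h1 : rS x m σ (stdSimplex.map θ t) = _ :=
        (congrArg (fun w => rS x m w (stdSimplex.map θ t)) (pS_lift σ f).symm).trans
          (rS_pS x m (EV.mk (lift σ f)) _)
      have h2 : rS x n ((nerve G).map θ.op σ) t = _ :=
        (congrArg (fun w => rS x n ((nerve G).map θ.op w) t) (pS_lift σ f).symm).trans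
          (rS_pS x n ((EV (VV x)).map θ.op (EV.mk (lift σ f))) _)
      rw [h1, h2, sι_map]
    · have h' := fun hh => h ((nonempty_iff θ σ).1 hh)
      have h1 : rS x m σ = _ := dif_neg h
      have h2 : rS x n ((nerve G).map θ.op σ) = _ := dif_neg h'
      rw [h1, h2]
      rfl)

lemma r_p (x : G) (e : RE (VV x)) : r x (p x e) = proj (x ⟶ x) e := by
  obtain ⟨n, v, t, rfl⟩ := sι_surj e
  rw [p_sι]
  exact (desc_sι _ _ _ _).trans (rS_pS x n v t)

instance : TopologicalSpace (ULift.{u} Prop) := ⊥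
instance : DiscreteTopology (ULift.{u} Prop) := ⟨rfl⟩

/-- Indicator of the component of `x`. -/
noncomputable def ind (x : G) : C(SSet.toTop.obj (nerve G), ULift.{u} Prop) :=
  desc (fun n (σ : ComposableArrows G n.len) => .const _ ⟨Nonempty (x ⟶ obj0 σ)⟩) (by
    intro n m θ σ t
    exact congrArg ULift.up (propext (nonempty_iff θ σ)))

lemma ind_sι (x : G) (n : SimplexCategory) (σ : (nerve G).obj (op n)) (t : Simp n) :
    ind x (sι σ t) = ⟨Nonempty (x ⟶ obj0 (n := n.len) σ)⟩ :=
  desc_sι _ _ _ _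

lemma ind_bpt (x y : G) : ind x (bpt y) = ⟨Nonempty (x ⟶ y)⟩ := ind_sι _ _ _ _

lemma exists_lift (x : G) (b : SSet.toTop.obj (nerve G)) (h : (ind x b).down) :
    ∃ e, p x e = b := by
  obtain ⟨n, σ, t, rfl⟩ := sι_surj b
  rw [ind_sι] at h
  obtain ⟨f⟩ := h
  refine ⟨sι (EV.mk (n := n) (lift σ f)) t, ?_⟩
  rw [p_sι]
  exact congrArg (fun w => sι (X := nerve G) (n := n) w t) (pS_lift σ f)

end gpd

end NerveGpd

namespace NerveGpd
open Opposite
universe u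

section gpd2

variable {G : Type} [Groupoid.{u} G]

lemma homotopic_cast {X : Type*} [TopologicalSpace X] {a b a' b' : X} (ha : a' = a) (hb : b' = b)
    {γ γ' : Path a b} (h : γ.Homotopic γ') : (γ.cast ha hb).Homotopic (γ'.cast ha hb) := by
  subst ha hb
  exact h

/-- path in `E` -/
noncomputable def epth {y z : G} (f : y ⟶ z) : Path (pt (⟨y, 𝟙 y⟩ : VV y)) (pt (⟨z, f⟩ : VV y)) :=
  PathConnectedSpace.somePath _ _

/-- path in the classifying space attached to an arrow -/
noncomputable def pth {y z : G} (f : y ⟶ z) : Path (bpt y) (bpt z) :=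
  ((epth f).map (p y).continuous).cast (p_pt _).symm (p_pt _).symm

lemma pth_apply {y z : G} (f : y ⟶ z) (t) : pth f t = p y (epth f t) := rfl

lemma pth_homotopic {y z : G} {f : y ⟶ z} (α : Path (pt (⟨y, 𝟙 y⟩ : VV y)) (pt (⟨z, f⟩ : VV y)))
    (β : Path (bpt y) (bpt z)) (h : ∀ t, β t = p y (α t)) : (pth f).Homotopic β := by
  have h1 : β = (α.map (p y).continuous).cast (p_pt _).symm (p_pt _).symm := by
    ext t
    exact h t
  rw [h1]
  apply homotopic_cast
  exact (SimplyConnectedSpace.paths_homotopic (epth f) α).map (p y)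

/-- The functor from `G`. -/
noncomputable def Phi (G : Type) [Groupoid.{u} G] :
    G ⥤ FundamentalGroupoid (SSet.toTop.obj (nerve G)) where
  obj y := ⟨bpt y⟩
  map f := Path.Homotopic.Quotient.mk (pth f)
  map_id y := by
    refine Quotient.sound (pth_homotopic (Path.refl _) (Path.refl _) fun t => ?_)
    exact (p_pt _).symm
  map_comp {x y z} f g := by
    refine Quotient.sound (pth_homotopic ((epth f).trans
      (((epth g).map (REmap (Lf f)).continuous).cast ?_ ?_)) ((pth f).trans (pth g)) fun t => ?_)
    · rw [REmap_pt, Lf, Category.comp_id]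
    · rw [REmap_pt, Lf]
    · rw [Path.trans_apply, Path.trans_apply]
      split_ifs
      · rfl
      · rw [pth_apply]
        exact (p_Lf f _).symm

lemma cov (x : G) : IsCoveringMap (proj (x ⟶ x) (V := VV x)) := (proj_cov (VV_free x)).isCoveringMap

instance : (Phi G).Faithful where
  map_injective {x y} f f' h := by
    have h1 : (pth f).Homotopic (pth f') := Quotient.exact h
    have h2 := h1.map (r x)
    have h3 := (cov x).liftPath_apply_one_eq_of_homotopicRel h2 (pt ⟨x, 𝟙 x⟩)
      (by simp [← r_p, p_pt]) (by simp [← r_p, p_pt])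
    have key : ∀ (f : x ⟶ y) hh, (cov x).liftPath ((pth f).map (r x).continuous : C(unitInterval, _))
        (pt ⟨x, 𝟙 x⟩) hh 1 = pt ⟨y, f⟩ := by
      intro f hh
      have : (epth f : C(unitInterval, _)) = (cov x).liftPath _ _ hh := by
        rw [IsCoveringMap.eq_liftPath_iff']
        refine ⟨funext fun t => ?_, (epth f).source⟩
        exact (r_p x _).symm
      rw [← this]
      exact (epth f).target
    have h3 := ((key f _).symm.trans h3).trans (key f' _)
    exact eq_of_heq (Sigma.mk.inj (pt_injective h3)).2

instance : (Phi G).Full where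
  map_surjective {x y} q := by
    obtain ⟨γ, rfl⟩ := Quotient.exists_rep q
    change Path (bpt x) (bpt y) at γ
    have hind : ∀ t, (ind x (γ t)).down := by
      intro t
      have : ind x (γ t) = ind x (γ 0) :=
        PreconnectedSpace.constant (Y := ULift.{u} Prop) inferInstance
          ((ind x).continuous.comp γ.continuous)
      rw [this, γ.source, ind_bpt]
      exact ⟨𝟙 x⟩
    let c : C(unitInterval, _) := (r x).comp γ.toContinuousMap
    have hc : c 0 = proj (x ⟶ x) (pt ⟨x, 𝟙 x⟩) := by
      change r x (γ 0) = _
      rw [γ.source, ← r_p, p_pt]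
    let Γ := (cov x).liftPath c _ hc
    have hΓ : ∀ t, p x (Γ t) = γ t := by
      intro t
      obtain ⟨e, he⟩ := exists_lift x (γ t) (hind t)
      rw [← he]
      apply p_eq_of_proj
      rw [← r_p x e, he]
      exact congrFun ((cov x).liftPath_lifts c _ hc) t
    have h1 := hind 1
    rw [γ.target, ind_bpt] at h1
    obtain ⟨f⟩ := h1
    have h2 : proj (x ⟶ x) (Γ 1) = proj (x ⟶ x) (pt ⟨y, f⟩) := by
      rw [← r_p, ← r_p, hΓ, γ.target, p_pt]
    obtain ⟨g, hg⟩ := (proj_cov (VV_free x)).apply_eq_iff_mem_orbit.1 h2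
    have hg : Γ 1 = pt ⟨y, g ≫ f⟩ := hg.symm.trans (smul_pt g _)
    refine ⟨g ≫ f, Quotient.sound (pth_homotopic
      ⟨Γ, (cov x).liftPath_zero c _ hc, hg⟩ γ fun t => (hΓ t).symm)⟩

instance : (Phi G).EssSurj where
  mem_essImage b := by
    obtain ⟨b⟩ := b
    obtain ⟨n, σ, t, rfl⟩ := sι_surj b
    have hb : sι σ (stdSimplex.map (zeroHom n) star) = bpt (obj0 (n := n.len) σ) := by
      rw [← sι_map]
      exact congrArg (fun w => sι (X := nerve G) (n := SimplexCategory.mk 0) w star)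
        (ComposableArrows.ext₀ rfl)
    let γ : Path (bpt (obj0 (n := n.len) σ)) (sι σ t) :=
      ((PathConnectedSpace.somePath (stdSimplex.map (zeroHom n) star : Simp n) t).map
        (sι σ).continuous).cast hb.symm rfl
    let m : (Phi G).obj (obj0 (n := n.len) σ) ⟶ ⟨sι σ t⟩ := Path.Homotopic.Quotient.mk γ
    exact ⟨_, ⟨asIso m⟩⟩

end gpd2

end NerveGpd

/-- For any groupoid `G`, the fundamental groupoid of the geometric realization of the
nerve of `G` (i.e. of the classifying space `BG`) is equivalent, as a category, to `G`. -/
theorem fundamentalGroupoid_of_realization_of_nerve_equiv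
    (G : Type) [Groupoid G] :
    Nonempty (FundamentalGroupoid (SSet.toTop.obj (nerve G)) ≌ G) := by
  have : (NerveGpd.Phi G).IsEquivalence := {}
  exact ⟨(NerveGpd.Phi G).asEquivalence.symm⟩
end
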